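/- arXiv:2107.11890 — 2 statements merged into one kernel-verified Lean document; each statement's English description precedes it below -/
import Mathlib

section
/- Let {X_𝔞}_{𝔞∈[𝔞₋,𝔞₊]} be a scale of Banach spaces, F an Ovsjannikov map of order q ≥ 0 and constant L > 0 on it, T > 0, x₀ ∈ X_{𝔞₋}, and let ℐ(f)(t) = x₀ + ∫₀ᵗ F(f(s)) ds. Then for every n ∈ ℕ the n-fold iterate ℐⁿ maps C([0,T], X_{𝔞₋}) into ⋂_{𝔞∈(𝔞₋,𝔞₊)} C([0,T], X_𝔞): for every continuous f : [0,T] → X_{𝔞₋} and every 𝔞 ∈ (𝔞₋, 𝔞₊), the map ℐⁿ(f) : [0,T] → X_𝔞 is well defined and continuous. -/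
open MeasureTheory Set Filter ENNReal

noncomputable section

/-- `f : [0,T] → X_a` is continuous, where `X_a` is the subspace of the ambient Banach
space `E` on which the extended norm `N a` is finite, with the metric induced by `N a`. -/
def ScaleContOn {E : Type*} [NormedAddCommGroup E]
    (N : ℝ → E → ℝ≥0∞) (a T : ℝ) (f : ℝ → E) : Prop :=
  (∀ t ∈ Icc (0 : ℝ) T, N a (f t) ≠ ⊤) ∧
  ∀ t₀ ∈ Icc (0 : ℝ) T,
    Tendsto (fun t => N a (f t - f t₀)) (nhdsWithin t₀ (Icc (0 : ℝ) T)) (nhds 0)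

/-- The map `ℐ(f)(t) = x₀ + ∫₀ᵗ F(f(s)) ds` (Bochner integral in the ambient space). -/
def Imap {E : Type*} [NormedAddCommGroup E] [NormedSpace ℝ E] [CompleteSpace E]
    (F : E → E) (x₀ : E) (f : ℝ → E) : ℝ → E :=
  fun t => x₀ + ∫ s in (0 : ℝ)..t, F (f s)

/-!
An extended norm that dominates the norm of `E` and is complete turns the subspace on which it is
finite into a Banach space `X_b` continuously embedded in `E`. The Bochner integral commutes with
this embedding, so a path that is continuous into `X_b` has a primitive that is continuous into
`X_b`, although the integral is computed in `E`. One application of `ℐ` therefore takes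
`C([0,T], X_a)` to `C([0,T], X_b)` for every `b > a`. This loss of regularity can be made
arbitrarily small, so `ℐ` leaves the intersection of the spaces `C([0,T], X_a)`, `a > amin`,
invariant.
-/

/-- An extended norm `ν` on a vector space `E` over `𝕜`: a norm that may take the value `⊤`. It
describes the normed space `{x | ν x ≠ ⊤}` without leaving `E`, as in `ScaleContOn`. -/
structure IsExtendedNorm (𝕜 : Type*) {E : Type*} [NormedField 𝕜] [AddCommGroup E] [Module 𝕜 E]
    (ν : E → ℝ≥0∞) : Prop where
  add_le : ∀ x y, ν (x + y) ≤ ν x + ν y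
  smul : ∀ (c : 𝕜) (x : E), ν (c • x) = ‖c‖ₑ * ν x
  eq_zero : ∀ x, ν x = 0 → x = 0

namespace IsExtendedNorm

section FiniteSpace

variable {𝕜 E : Type*} [NormedField 𝕜] [AddCommGroup E] [Module 𝕜 E] {ν : E → ℝ≥0∞}

theorem map_zero (h : IsExtendedNorm 𝕜 ν) : ν 0 = 0 := by
  simpa only [zero_smul, enorm_zero, zero_mul] using h.smul 0 0

/-- The subspace of `E` on which the extended norm `ν` is finite. -/
def finiteSubmodule (h : IsExtendedNorm 𝕜 ν) : Submodule 𝕜 E where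
  carrier := {x | ν x ≠ ⊤}
  zero_mem' := ne_of_eq_of_ne h.map_zero zero_ne_top
  add_mem' := fun hx hy => ne_top_of_le_ne_top (add_ne_top.2 ⟨hx, hy⟩) (h.add_le _ _)
  smul_mem' := fun c x hx => ne_of_eq_of_ne (h.smul c x) (mul_ne_top enorm_ne_top hx)

/-- The subspace `{x | ν x ≠ ⊤}` as a normed space with norm `ν`. It is a type synonym of
`h.finiteSubmodule`, which already carries the norm of `E` when `E` is normed. -/
def FiniteSpace (h : IsExtendedNorm 𝕜 ν) : Type _ := h.finiteSubmodule

instance (h : IsExtendedNorm 𝕜 ν) : AddCommGroup h.FiniteSpace :=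
  inferInstanceAs (AddCommGroup h.finiteSubmodule)

instance (h : IsExtendedNorm 𝕜 ν) : Module 𝕜 h.FiniteSpace :=
  inferInstanceAs (Module 𝕜 h.finiteSubmodule)

/-- The inclusion of `{x | ν x ≠ ⊤}` into `E`. -/
def incl (h : IsExtendedNorm 𝕜 ν) : h.FiniteSpace →ₗ[𝕜] E := h.finiteSubmodule.subtype

theorem incl_injective (h : IsExtendedNorm 𝕜 ν) : Function.Injective h.incl :=
  h.finiteSubmodule.injective_subtype

theorem apply_incl_ne_top (h : IsExtendedNorm 𝕜 ν) (v : h.FiniteSpace) : ν (h.incl v) ≠ ⊤ :=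
  Subtype.property (p := (· ∈ h.finiteSubmodule)) v

theorem exists_incl_eq (h : IsExtendedNorm 𝕜 ν) {x : E} (hx : ν x ≠ ⊤) : ∃ v, h.incl v = x :=
  ⟨(⟨x, hx⟩ : h.finiteSubmodule), rfl⟩

instance (h : IsExtendedNorm 𝕜 ν) : Norm h.FiniteSpace := ⟨fun v => (ν (h.incl v)).toReal⟩

theorem norm_def (h : IsExtendedNorm 𝕜 ν) (v : h.FiniteSpace) : ‖v‖ = (ν (h.incl v)).toReal := rfl

theorem normedSpaceCore (h : IsExtendedNorm 𝕜 ν) : NormedSpace.Core 𝕜 h.FiniteSpace where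
  norm_nonneg _ := toReal_nonneg
  norm_smul c v := by
    rw [norm_def, norm_def, _root_.map_smul, h.smul, toReal_mul, toReal_enorm]
  norm_triangle v w := by
    rw [norm_def, norm_def, norm_def, map_add,
      ← toReal_add (h.apply_incl_ne_top v) (h.apply_incl_ne_top w)]
    exact toReal_mono (add_ne_top.2 ⟨h.apply_incl_ne_top v, h.apply_incl_ne_top w⟩) (h.add_le _ _)
  norm_eq_zero_iff v := by
    rw [norm_def, toReal_eq_zero_iff, or_iff_left (h.apply_incl_ne_top v)]
    refine ⟨fun hv => h.incl_injective ?_, fun hv => ?_⟩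
    · rw [h.eq_zero _ hv, _root_.map_zero]
    · rw [hv, _root_.map_zero, h.map_zero]

instance (h : IsExtendedNorm 𝕜 ν) : NormedAddCommGroup h.FiniteSpace :=
  NormedAddCommGroup.ofCore h.normedSpaceCore

instance (h : IsExtendedNorm 𝕜 ν) : NormedSpace 𝕜 h.FiniteSpace :=
  NormedSpace.ofCore h.normedSpaceCore

theorem enorm_eq (h : IsExtendedNorm 𝕜 ν) (v : h.FiniteSpace) : ‖v‖ₑ = ν (h.incl v) := by
  rw [← ofReal_norm, norm_def, ofReal_toReal (h.apply_incl_ne_top v)]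

theorem edist_eq (h : IsExtendedNorm 𝕜 ν) (v w : h.FiniteSpace) :
    edist v w = ν (h.incl v - h.incl w) := by
  rw [edist_eq_enorm_sub, h.enorm_eq, map_sub]

theorem continuousOn_iff {X : Type*} [TopologicalSpace X] (h : IsExtendedNorm 𝕜 ν)
    {v : X → h.FiniteSpace} {s : Set X} :
    ContinuousOn v s ↔
      ∀ x₀ ∈ s, Tendsto (fun x => ν (h.incl (v x) - h.incl (v x₀))) (nhdsWithin x₀ s) (nhds 0) := by
  simp only [ContinuousOn, ContinuousWithinAt, tendsto_iff_edist_tendsto_0, h.edist_eq]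

theorem completeSpace_finiteSpace (h : IsExtendedNorm 𝕜 ν)
    (hcomplete : ∀ u : ℕ → E, (∀ n, ν (u n) ≠ ⊤) →
      (∀ ε : ℝ≥0∞, 0 < ε → ∃ K : ℕ, ∀ m ≥ K, ∀ n ≥ K, ν (u m - u n) < ε) →
      ∃ x : E, ν x ≠ ⊤ ∧ Tendsto (fun n => ν (u n - x)) atTop (nhds 0)) :
    CompleteSpace h.FiniteSpace := by
  refine EMetric.complete_of_cauchySeq_tendsto fun u hu => ?_
  simp only [EMetric.cauchySeq_iff, h.edist_eq] at hu
  obtain ⟨x, hx, hux⟩ := hcomplete (h.incl ∘ u) (fun n => h.apply_incl_ne_top (u n)) hu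
  obtain ⟨v, rfl⟩ := h.exists_incl_eq hx
  refine ⟨v, tendsto_iff_edist_tendsto_0.2 ?_⟩
  simpa only [h.edist_eq, Function.comp_apply] using hux

end FiniteSpace

section Normed

variable {𝕜 E : Type*} [NormedField 𝕜] [NormedAddCommGroup E] [NormedSpace 𝕜 E]

/-- The inclusion of `{x | ν x ≠ ⊤}` into `E`, as a continuous linear map, for an extended norm
`ν` dominating the norm of `E`. -/
def inclL {ν : E → ℝ≥0∞} (h : IsExtendedNorm 𝕜 ν) (hle : ∀ x, ‖x‖ₑ ≤ ν x) :
    h.FiniteSpace →L[𝕜] E :=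
  h.incl.mkContinuous 1 fun v => by
    rw [one_mul, ← enorm_le_iff_norm_le, h.enorm_eq]
    exact hle _

theorem scaleContOn_iff_exists_lift {N : ℝ → E → ℝ≥0∞} {a T : ℝ} {f : ℝ → E}
    (h : IsExtendedNorm 𝕜 (N a)) :
    ScaleContOn N a T f ↔ ∃ v : ℝ → h.FiniteSpace,
      ContinuousOn v (Icc 0 T) ∧ EqOn (h.incl ∘ v) f (Icc 0 T) := by
  have continuousOn_lift_iff {v : ℝ → h.FiniteSpace} (hv : EqOn (h.incl ∘ v) f (Icc 0 T)) :
      ContinuousOn v (Icc 0 T) ↔ ∀ t₀ ∈ Icc 0 T,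
        Tendsto (fun t => N a (f t - f t₀)) (nhdsWithin t₀ (Icc 0 T)) (nhds 0) := by
    refine h.continuousOn_iff.trans <| forall₂_congr fun t₀ ht₀ => tendsto_congr' ?_
    filter_upwards [self_mem_nhdsWithin] with t ht
    rw [← hv ht, ← hv ht₀, Function.comp_apply, Function.comp_apply]
  constructor
  · rintro ⟨hfin, hcont⟩
    choose! v hv using fun t ht => h.exists_incl_eq (hfin t ht)
    exact ⟨v, (continuousOn_lift_iff hv).2 hcont, hv⟩
  · rintro ⟨v, hvcont, hv⟩
    exact ⟨fun t ht => hv ht ▸ h.apply_incl_ne_top (v t), (continuousOn_lift_iff hv).1 hvcont⟩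

end Normed

end IsExtendedNorm

section Scale

variable {E : Type*} [NormedAddCommGroup E]

theorem continuousOn_intervalIntegral_Icc [NormedSpace ℝ E] {a b : ℝ} {f : ℝ → E}
    (hf : ContinuousOn f (Icc a b)) :
    ContinuousOn (fun t => ∫ s in a..t, f s) (Icc a b) := by
  rcases le_or_gt a b with hab | hab
  · rw [← uIcc_of_le hab] at hf ⊢
    exact intervalIntegral.continuousOn_primitive_interval hf.integrableOn_uIcc
  · simp only [Icc_eq_empty hab.not_ge, continuousOn_empty]

theorem ScaleContOn.mono {N : ℝ → E → ℝ≥0∞} {a b T : ℝ} {f : ℝ → E} (hf : ScaleContOn N a T f)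
    (hab : ∀ x, N b x ≤ N a x) : ScaleContOn N b T f :=
  ⟨fun t ht => ne_top_of_le_ne_top (hf.1 t ht) (hab _), fun t₀ ht₀ =>
    tendsto_of_tendsto_of_tendsto_of_le_of_le tendsto_const_nhds (hf.2 t₀ ht₀)
      (fun _ => zero_le) fun _ => hab _⟩

theorem ScaleContOn.const_add_integral [NormedSpace ℝ E] [CompleteSpace E]
    {N : ℝ → E → ℝ≥0∞} {a T : ℝ} {g : ℝ → E}
    (h : IsExtendedNorm ℝ (N a)) [CompleteSpace h.FiniteSpace] (hle : ∀ x, ‖x‖ₑ ≤ N a x)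
    {x₀ : E} (hx₀ : N a x₀ ≠ ⊤) (hg : ScaleContOn N a T g) :
    ScaleContOn N a T fun t => x₀ + ∫ s in (0 : ℝ)..t, g s := by
  obtain ⟨w, rfl⟩ := h.exists_incl_eq hx₀
  obtain ⟨v, hvcont, hv⟩ := h.scaleContOn_iff_exists_lift.1 hg
  refine h.scaleContOn_iff_exists_lift.2
    ⟨fun t => w + ∫ s in (0 : ℝ)..t, v s, (continuousOn_intervalIntegral_Icc hvcont).const_add w,
      fun t ht => ?_⟩
  have hsub : uIcc 0 t ⊆ Icc 0 T := uIcc_of_le ht.1 ▸ Icc_subset_Icc_right ht.2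
  calc h.incl (w + ∫ s in (0 : ℝ)..t, v s)
      = h.incl w + h.inclL hle (∫ s in (0 : ℝ)..t, v s) := map_add _ _ _
    _ = h.incl w + ∫ s in (0 : ℝ)..t, h.inclL hle (v s) := by
        rw [(h.inclL hle).intervalIntegral_comp_comm (hvcont.mono hsub).intervalIntegrable]
    _ = h.incl w + ∫ s in (0 : ℝ)..t, g s :=
        congrArg _ <| intervalIntegral.integral_congr (hv.mono hsub)

/-- `F` maps `X_a` into `X_b` and is continuous from `X_a` to `X_b`, where `X_a` and `X_b` are the
subspaces of `E` on which `N a` and `N b` are finite. The filter in the limit is that of the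
neighbourhoods of `x` in `X_a`, pushed forward to `E`. -/
def ScaleMapContinuous (N : ℝ → E → ℝ≥0∞) (a b : ℝ) (F : E → E) : Prop :=
  (∀ x, N a x ≠ ⊤ → N b (F x) ≠ ⊤) ∧
  ∀ x, N a x ≠ ⊤ →
    Tendsto (fun y => N b (F y - F x))
      (comap (fun y => N a (y - x)) (nhds 0) ⊓ principal {y | N a y ≠ ⊤}) (nhds 0)

theorem ScaleMapContinuous.of_lipschitz {N : ℝ → E → ℝ≥0∞} {a b : ℝ} {F : E → E} {C : ℝ≥0∞}
    (hC : C ≠ ⊤) (hmap : ∀ x, N a x ≠ ⊤ → N b (F x) ≠ ⊤)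
    (hlip : ∀ x y, N a x ≠ ⊤ → N a y ≠ ⊤ → N b (F x - F y) ≤ C * N a (x - y)) :
    ScaleMapContinuous N a b F := by
  refine ⟨hmap, fun x hx => ?_⟩
  have hbound : Tendsto (fun y => C * N a (y - x))
      (comap (fun y => N a (y - x)) (nhds 0) ⊓ principal {y | N a y ≠ ⊤}) (nhds 0) := by
    have hdist := (tendsto_comap (f := fun y => N a (y - x)) (x := nhds 0)).mono_left
      (inf_le_left (b := principal {y | N a y ≠ ⊤}))
    simpa only [mul_zero] using ENNReal.Tendsto.const_mul hdist (.inr hC)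
  refine tendsto_of_tendsto_of_tendsto_of_le_of_le' tendsto_const_nhds hbound
    (.of_forall fun _ => zero_le) ?_
  filter_upwards [mem_inf_of_right (mem_principal_self _)] with y hy
  exact hlip y x hy hx

theorem ScaleContOn.map {N : ℝ → E → ℝ≥0∞} {a b T : ℝ} {F : E → E} {f : ℝ → E}
    (hf : ScaleContOn N a T f) (hF : ScaleMapContinuous N a b F) :
    ScaleContOn N b T fun t => F (f t) :=
  ⟨fun t ht => hF.1 _ (hf.1 t ht), fun t₀ ht₀ => (hF.2 _ (hf.1 t₀ ht₀)).comp <|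
    tendsto_inf.2 ⟨tendsto_comap_iff.2 (hf.2 t₀ ht₀),
      tendsto_principal.2 (eventually_mem_nhdsWithin.mono hf.1)⟩⟩

/-- The spaces `X_a = {x | N a x ≠ ⊤}`, normed by `N a`, form a scale of Banach spaces over
`[amin, amax]` whose largest member `X_amax` is the ambient space `E`. -/
structure IsBanachScale [NormedSpace ℝ E] (amin amax : ℝ) (N : ℝ → E → ℝ≥0∞) : Prop where
  eq_enorm : ∀ x, N amax x = ‖x‖ₑ
  anti : ∀ a b, amin ≤ a → a ≤ b → b ≤ amax → ∀ x, N b x ≤ N a x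
  add_le : ∀ a, amin ≤ a → a ≤ amax → ∀ x y, N a (x + y) ≤ N a x + N a y
  smul : ∀ a, amin ≤ a → a ≤ amax → ∀ (c : ℝ) (x : E), N a (c • x) = ‖c‖ₑ * N a x
  complete : ∀ a, amin ≤ a → a ≤ amax → ∀ u : ℕ → E, (∀ n, N a (u n) ≠ ⊤) →
    (∀ ε : ℝ≥0∞, 0 < ε → ∃ K : ℕ, ∀ m ≥ K, ∀ n ≥ K, N a (u m - u n) < ε) →
    ∃ x : E, N a x ≠ ⊤ ∧ Tendsto (fun n => N a (u n - x)) atTop (nhds 0)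

namespace IsBanachScale

variable [NormedSpace ℝ E] {amin amax a : ℝ} {N : ℝ → E → ℝ≥0∞}

theorem enorm_le (hN : IsBanachScale amin amax N) (ha : amin ≤ a) (ha' : a ≤ amax) (x : E) :
    ‖x‖ₑ ≤ N a x :=
  hN.eq_enorm x ▸ hN.anti a amax ha ha' le_rfl x

theorem isExtendedNorm (hN : IsBanachScale amin amax N) (ha : amin ≤ a) (ha' : a ≤ amax) :
    IsExtendedNorm ℝ (N a) where
  add_le := hN.add_le a ha ha'
  smul := hN.smul a ha ha'
  eq_zero x hx := enorm_eq_zero.1 <| le_antisymm (hx ▸ hN.enorm_le ha ha' x) zero_le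

theorem scaleContOn_imap [CompleteSpace E] (hN : IsBanachScale amin amax N) {b T : ℝ}
    (hb : amin ≤ b) (hb' : b ≤ amax) {F : E → E} (hF : ScaleMapContinuous N a b F) {x₀ : E}
    (hx₀ : N b x₀ ≠ ⊤) {f : ℝ → E} (hf : ScaleContOn N a T f) :
    ScaleContOn N b T (Imap F x₀ f) :=
  have := (hN.isExtendedNorm hb hb').completeSpace_finiteSpace (hN.complete b hb hb')
  (hf.map hF).const_add_integral (hN.isExtendedNorm hb hb') (hN.enorm_le hb hb') hx₀

end IsBanachScale

theorem statement11_general [NormedSpace ℝ E] [CompleteSpace E] {amin amax : ℝ}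
    {N : ℝ → E → ℝ≥0∞} (hN : IsBanachScale amin amax N) {F : E → E}
    (hF : ∀ a b, amin < a → a < b → b ≤ amax → ScaleMapContinuous N a b F)
    {x₀ : E} (hx₀ : ∀ a, amin < a → a ≤ amax → N a x₀ ≠ ⊤) {T : ℝ} {f : ℝ → E}
    (hf : ∀ a, amin < a → a ≤ amax → ScaleContOn N a T f) (n : ℕ) :
    ∀ a, amin < a → a ≤ amax → ScaleContOn N a T ((Imap F x₀)^[n] f) := by
  induction n with
  | zero => exact hf
  | succ n ih =>
    intro b hb hb'
    obtain ⟨a, ha, hab⟩ := exists_between hb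
    rw [Function.iterate_succ_apply']
    exact hN.scaleContOn_imap hb.le hb' (hF a b ha hab hb') (hx₀ b hb hb')
      (ih a ha (hab.le.trans hb'))

end Scale

theorem statement11
    -- the scale of Banach spaces, realised inside the ambient space `E = X_{amax}`
    (E : Type*) [NormedAddCommGroup E] [NormedSpace ℝ E] [CompleteSpace E]
    (amin amax : ℝ) (hamin : 0 < amin) (hminmax : amin < amax)
    (N : ℝ → E → ℝ≥0∞)
    (htop : ∀ x : E, N amax x = (‖x‖₊ : ℝ≥0∞))
    (hmono : ∀ a b : ℝ, amin ≤ a → a ≤ b → b ≤ amax → ∀ x : E, N b x ≤ N a x)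
    (hzero : ∀ a : ℝ, amin ≤ a → a ≤ amax → N a 0 = 0)
    (hadd : ∀ a : ℝ, amin ≤ a → a ≤ amax → ∀ x y : E, N a (x + y) ≤ N a x + N a y)
    (hsmul : ∀ a : ℝ, amin ≤ a → a ≤ amax → ∀ (c : ℝ) (x : E),
      N a (c • x) = (‖c‖₊ : ℝ≥0∞) * N a x)
    (hcomplete : ∀ a : ℝ, amin ≤ a → a ≤ amax → ∀ u : ℕ → E,
      (∀ n, N a (u n) ≠ ⊤) →
      (∀ ε : ℝ≥0∞, 0 < ε → ∃ K : ℕ, ∀ m ≥ K, ∀ n ≥ K, N a (u m - u n) < ε) →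
      ∃ x : E, N a x ≠ ⊤ ∧ Tendsto (fun n => N a (u n - x)) atTop (nhds 0))
    -- the Ovsjannikov map `F` of order `q` and constant `L`
    (q L : ℝ) (hq : 0 ≤ q) (hL : 0 < L) (F : E → E)
    (hFmap : ∀ a b : ℝ, amin ≤ a → a < b → b ≤ amax → ∀ x : E,
      N a x ≠ ⊤ → N b (F x) ≠ ⊤)
    (hFlip : ∀ a b : ℝ, amin ≤ a → a < b → b ≤ amax → ∀ x y : E,
      N a x ≠ ⊤ → N a y ≠ ⊤ →
      N b (F x - F y) ≤ ENNReal.ofReal (L / (b - a) ^ q) * N a (x - y))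
    (T : ℝ) (hT : 0 < T) (x₀ : E) (hx₀ : N amin x₀ ≠ ⊤)
    :
    ∀ n : ℕ, ∀ f : ℝ → E, ScaleContOn N amin T f →
      ∀ a : ℝ, amin < a → a < amax → ScaleContOn N a T ((Imap F x₀)^[n] f) := by
  intro n f hf a ha ha'
  have hN : IsBanachScale amin amax N := ⟨htop, hmono, hadd, hsmul, hcomplete⟩
  exact statement11_general hN
    (fun a b ha hab hb => .of_lipschitz ofReal_ne_top (hFmap a b ha.le hab hb)
      (hFlip a b ha.le hab hb))
    (fun b hb hb' => ne_top_of_le_ne_top hx₀ (hmono amin b le_rfl hb.le hb' x₀))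
    (fun b hb hb' => hf.mono (hmono amin b le_rfl hb.le hb')) n a ha ha'.le
end
end

section
/- Under the hypotheses of the comparison theorem (Q_{x,y} ≥ 0 with z ↦ Qz an Ovsjannikov map of order q < 1 and constant L on the scale {l¹_𝔞}_{𝔞∈[𝔞₋,𝔞₊]}, z ∈ l¹_{𝔞₋}, g : [0,T] → l¹_{𝔞₋} continuous with g_x(t) ≤ z_x + ∑_{y∈γ} Q_{x,y} ∫₀ᵗ g_y(s) ds for all x, t), assume additionally that z_x ≥ 0 for all x ∈ γ and g_x(t) ≥ 0 for all x ∈ γ and t ∈ [0,T]. Then for all 𝔞₋ ≤ α < β ≤ 𝔞₊ there is a constant K(α,β) = ∑_{n=0}^∞ LⁿTⁿ n^{qn} / ((β−α)^{qn} n!) such that ∑_{x∈γ} e^{−β|x|} sup_{t∈[0,T]} g_x(t) ≤ K(α,β) · ∑_{x∈γ} e^{−α|x|} z_x. -/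
open Set Filter Metric MeasureTheory

/-!
Iterating `g(t) ≤ z + Q ∫₀ᵗ g` bounds `g(t)` by the partial sums of `e^{tQ} |z|` plus a remainder
`tᴺ/N! · Qᴺ w`, where `w` dominates `g` on `[0, T]`. Cutting `[α, β]` into `n` equal steps, the
Ovsjannikov property gives `‖Qⁿ v‖_β ≤ (L / ((β - α) / n)^q)ⁿ ‖v‖_α`. Since `n! ≥ (n / e)ⁿ`, the
factor `n^{qn} / n!` decays superexponentially when `q < 1`. Hence the remainder vanishes and
`‖e^{TQ} |z|‖_β ≤ K(α, β) ‖z‖_α`.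
-/

section

open scoped Topology

/-- The constants `Lⁿ Tⁿ n^{qn} / (δ^{qn} n!)` whose sum over `n`, with `δ = β - α`, is the constant
`K(α, β)` of the comparison estimate. -/
noncomputable def ovsjannikovCoeff (q L T δ : ℝ) (n : ℕ) : ℝ :=
  L ^ n * T ^ n * (n : ℝ) ^ (q * n) / (δ ^ (q * n) * (n.factorial : ℝ))

theorem ovsjannikovCoeff_eq (q L T : ℝ) {δ : ℝ} (hδ : 0 ≤ δ) (n : ℕ) :
    ovsjannikovCoeff q L T δ n =
      T ^ n / n.factorial * ((L / δ ^ q) ^ n * (n : ℝ) ^ (q * n)) := by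
  rw [ovsjannikovCoeff, Real.rpow_mul hδ, Real.rpow_natCast, div_pow]
  ring

theorem rpow_mul_self_div_factorial_le (q : ℝ) {n : ℕ} (hn : 0 < n) :
    (n : ℝ) ^ (q * n) / n.factorial ≤ (Real.exp 1 * (n : ℝ) ^ (-(1 - q))) ^ n := by
  have hn' : (0 : ℝ) < n := Nat.cast_pos.2 hn
  calc (n : ℝ) ^ (q * n) / n.factorial
      = ((n : ℝ) ^ (-(1 - q))) ^ n * ((n : ℝ) ^ n / n.factorial) := by
        rw [← Real.rpow_natCast _ n, ← Real.rpow_natCast _ n, ← Real.rpow_mul hn'.le,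
          ← mul_div_assoc, ← Real.rpow_add hn']
        ring_nf
    _ ≤ ((n : ℝ) ^ (-(1 - q))) ^ n * Real.exp n := by
        gcongr
        exact Real.pow_div_factorial_le_exp _ hn'.le n
    _ = (Real.exp 1 * (n : ℝ) ^ (-(1 - q))) ^ n := by
        rw [mul_pow, ← Real.exp_nat_mul, mul_one, mul_comm]

theorem summable_pow_mul_rpow_div_factorial {q : ℝ} (hq : q < 1) (C : ℝ) :
    Summable fun n : ℕ => C ^ n * ((n : ℝ) ^ (q * n) / n.factorial) := by
  have base_tendsto : Tendsto (fun n : ℕ => |C| * (Real.exp 1 * (n : ℝ) ^ (-(1 - q))))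
      atTop (𝓝 0) := by
    simpa using (((tendsto_rpow_neg_atTop (sub_pos.2 hq)).comp
      tendsto_natCast_atTop_atTop).const_mul (Real.exp 1)).const_mul |C|
  refine Summable.of_norm_bounded_eventually_nat summable_geometric_two ?_
  filter_upwards [base_tendsto.eventually_le_const one_half_pos, eventually_gt_atTop 0]
    with n base_le hn
  calc ‖C ^ n * ((n : ℝ) ^ (q * n) / n.factorial)‖
      = |C| ^ n * ((n : ℝ) ^ (q * n) / n.factorial) := by
        rw [norm_mul, norm_pow, Real.norm_eq_abs, Real.norm_of_nonneg (by positivity)]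
    _ ≤ |C| ^ n * (Real.exp 1 * (n : ℝ) ^ (-(1 - q))) ^ n := by
        gcongr
        exact rpow_mul_self_div_factorial_le q hn
    _ = (|C| * (Real.exp 1 * (n : ℝ) ^ (-(1 - q)))) ^ n := (mul_pow _ _ _).symm
    _ ≤ (1 / 2) ^ n := by gcongr

theorem summable_ovsjannikovCoeff {q : ℝ} (hq : q < 1) (L T : ℝ) {δ : ℝ} (hδ : 0 ≤ δ) :
    Summable (ovsjannikovCoeff q L T δ) := by
  refine (summable_pow_mul_rpow_div_factorial hq (L * T / δ ^ q)).congr fun n => ?_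
  rw [ovsjannikovCoeff_eq q L T hδ, mul_div_right_comm, mul_pow]
  ring

variable {ι : Type*}

/-- Membership of a real family in the weighted space `ℓ¹(w)`. -/
def MemWeightedL1 (w v : ι → ℝ) : Prop :=
  Summable fun x => w x * |v x|

/-- The norm of the weighted space `ℓ¹(w)`; its value is the junk `0` off that space. -/
noncomputable def weightedL1Norm (w v : ι → ℝ) : ℝ :=
  ∑' x, w x * |v x|

section WeightedL1

variable {w u v : ι → ℝ}

theorem weightedL1Norm_nonneg (hw : 0 ≤ w) (v : ι → ℝ) : 0 ≤ weightedL1Norm w v :=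
  tsum_nonneg fun x => mul_nonneg (hw x) (abs_nonneg _)

theorem memWeightedL1_abs : MemWeightedL1 w |v| ↔ MemWeightedL1 w v := by
  simp only [MemWeightedL1, Pi.abs_apply, abs_abs]

theorem weightedL1Norm_abs (w v : ι → ℝ) : weightedL1Norm w |v| = weightedL1Norm w v := by
  simp only [weightedL1Norm, Pi.abs_apply, abs_abs]

namespace MemWeightedL1

theorem of_abs_le_add {u₁ u₂ : ι → ℝ} (hw : 0 ≤ w) (h₁ : MemWeightedL1 w u₁)
    (h₂ : MemWeightedL1 w u₂) (h : ∀ x, |v x| ≤ |u₁ x| + |u₂ x|) : MemWeightedL1 w v :=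
  Summable.of_nonneg_of_le (fun x => mul_nonneg (hw x) (abs_nonneg _))
    (fun x => (mul_le_mul_of_nonneg_left (h x) (hw x)).trans_eq (mul_add _ _ _))
    (Summable.add h₁ h₂)

theorem add (hw : 0 ≤ w) (hu : MemWeightedL1 w u) (hv : MemWeightedL1 w v) :
    MemWeightedL1 w (u + v) :=
  of_abs_le_add hw hu hv fun _ => abs_add_le _ _

theorem sub (hw : 0 ≤ w) (hu : MemWeightedL1 w u) (hv : MemWeightedL1 w v) :
    MemWeightedL1 w (u - v) :=
  of_abs_le_add hw hu hv fun _ => abs_sub _ _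

theorem mono_weight {w' : ι → ℝ} (hw' : 0 ≤ w') (hww' : w' ≤ w) (hv : MemWeightedL1 w v) :
    MemWeightedL1 w' v :=
  Summable.of_nonneg_of_le (fun x => mul_nonneg (hw' x) (abs_nonneg _))
    (fun x => mul_le_mul_of_nonneg_right (hww' x) (abs_nonneg _)) hv

theorem of_le_of_le {u₁ u₂ : ι → ℝ} (hw : 0 ≤ w) (h₁ : MemWeightedL1 w u₁)
    (h₂ : MemWeightedL1 w u₂) (h₁v : u₁ ≤ v) (hv₂ : v ≤ u₂) : MemWeightedL1 w v :=
  of_abs_le_add hw h₁ h₂ fun x =>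
    (abs_le_max_abs_abs (h₁v x) (hv₂ x)).trans (max_le_add_of_nonneg (abs_nonneg _) (abs_nonneg _))

theorem summable_mul (hw : 0 ≤ w) (hv : MemWeightedL1 w v) : Summable fun x => w x * v x :=
  (hv.congr fun x => by rw [abs_mul, abs_of_nonneg (hw x)]).of_abs

theorem mul_abs_le_norm (hw : 0 ≤ w) (hv : MemWeightedL1 w v) (x : ι) :
    w x * |v x| ≤ weightedL1Norm w v :=
  hv.le_tsum x fun y _ => mul_nonneg (hw y) (abs_nonneg _)

theorem sum_le_norm (hw : 0 ≤ w) (hv : MemWeightedL1 w v) (s : Finset ι) :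
    ∑ x ∈ s, w x * |v x| ≤ weightedL1Norm w v :=
  hv.sum_le_tsum s fun y _ => mul_nonneg (hw y) (abs_nonneg _)

theorem abs_norm_sub_norm_le (hw : 0 ≤ w) (hu : MemWeightedL1 w u) (hv : MemWeightedL1 w v) :
    |weightedL1Norm w u - weightedL1Norm w v| ≤ weightedL1Norm w (u - v) := by
  rw [weightedL1Norm, weightedL1Norm, ← Summable.tsum_sub hu hv, ← Real.norm_eq_abs]
  refine tsum_of_norm_bounded (hu.sub hw hv).hasSum fun x => ?_
  rw [← mul_sub, norm_mul, Real.norm_of_nonneg (hw x)]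
  exact mul_le_mul_of_nonneg_left (abs_abs_sub_abs_le _ _) (hw x)

theorem summable_prod_of_summable_norm {κ : Type*} {F : κ → ι → ℝ} (hw : 0 ≤ w)
    (hmem : ∀ k, MemWeightedL1 w (F k)) (hnorm : Summable fun k => weightedL1Norm w (F k)) :
    Summable fun p : κ × ι => w p.2 * |F p.1 p.2| :=
  (summable_prod_of_nonneg fun p => mul_nonneg (hw p.2) (abs_nonneg _)).2 ⟨hmem, hnorm⟩

theorem summable_apply_of_summable_norm {κ : Type*} {F : κ → ι → ℝ} (hw : ∀ x, 0 < w x)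
    (hmem : ∀ k, MemWeightedL1 w (F k)) (hnorm : Summable fun k => weightedL1Norm w (F k))
    (x : ι) : Summable fun k => F k x :=
  have hcol : Summable fun k => w x * |F k x| :=
    (summable_prod_of_summable_norm (fun y => (hw y).le) hmem hnorm).prod_symm.prod_factor x
  ((summable_mul_left_iff (hw x).ne').1 hcol).of_abs

theorem tsum_and_norm_tsum_le {κ : Type*} {F : κ → ι → ℝ} (hw : ∀ x, 0 < w x)
    (hmem : ∀ k, MemWeightedL1 w (F k)) (hnorm : Summable fun k => weightedL1Norm w (F k)) :
    MemWeightedL1 w (fun x => ∑' k, F k x) ∧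
      weightedL1Norm w (fun x => ∑' k, F k x) ≤ ∑' k, weightedL1Norm w (F k) := by
  have hprod := summable_prod_of_summable_norm (fun y => (hw y).le) hmem hnorm
  have hcols : Summable fun x => ∑' k, w x * |F k x| := hprod.prod_symm.prod
  have le_tsum_abs : ∀ x, w x * |∑' k, F k x| ≤ ∑' k, w x * |F k x| := fun x => by
    rw [tsum_mul_left]
    exact mul_le_mul_of_nonneg_left
      (norm_tsum_le_tsum_norm (summable_apply_of_summable_norm hw hmem hnorm x).norm) (hw x).le
  have mem_tsum : MemWeightedL1 w fun x => ∑' k, F k x :=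
    Summable.of_nonneg_of_le (fun x => mul_nonneg (hw x).le (abs_nonneg _)) le_tsum_abs hcols
  refine ⟨mem_tsum, ?_⟩
  calc weightedL1Norm w (fun x => ∑' k, F k x)
      ≤ ∑' x, ∑' k, w x * |F k x| := mem_tsum.tsum_le_tsum le_tsum_abs hcols
    _ = ∑' k, weightedL1Norm w (F k) := Summable.tsum_comm (f := fun k x => w x * |F k x|) hprod

theorem integral_abs {g : ℝ → ι → ℝ} {T M : ℝ} (hw : 0 ≤ w) (hT : 0 ≤ T)
    (hmem : ∀ t ∈ Icc 0 T, MemWeightedL1 w (g t))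
    (hnorm : ∀ t ∈ Icc 0 T, weightedL1Norm w (g t) ≤ M)
    (hint : ∀ x, IntervalIntegrable (fun t => g t x) volume 0 T) :
    MemWeightedL1 w fun x => ∫ t in (0 : ℝ)..T, |g t x| := by
  have habs : ∀ x, IntervalIntegrable (fun t => w x * |g t x|) volume 0 T :=
    fun x => (hint x).abs.const_mul _
  refine summable_of_sum_le (c := ∫ _ in (0 : ℝ)..T, M)
    (fun x => mul_nonneg (hw x) (abs_nonneg _)) fun s => ?_
  calc ∑ x ∈ s, w x * |(∫ t in (0 : ℝ)..T, |g t x|)|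
      = ∫ t in (0 : ℝ)..T, ∑ x ∈ s, w x * |g t x| := by
        rw [intervalIntegral.integral_finsetSum fun x _ => habs x]
        refine Finset.sum_congr rfl fun x _ => ?_
        rw [abs_of_nonneg (intervalIntegral.integral_nonneg hT fun _ _ => abs_nonneg _),
          intervalIntegral.integral_const_mul]
    _ ≤ ∫ _ in (0 : ℝ)..T, M :=
        intervalIntegral.integral_mono_on hT
          (by simpa only [Finset.sum_fn] using IntervalIntegrable.sum s fun x _ => habs x)
          intervalIntegrable_const fun t ht => ((hmem t ht).sum_le_norm hw s).trans (hnorm t ht)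

end MemWeightedL1

/-- `g` is a continuous map from `s` into `ℓ¹(w)`. -/
structure ContinuousOnWeightedL1 {X : Type*} [TopologicalSpace X] (w : ι → ℝ) (g : X → ι → ℝ)
    (s : Set X) : Prop where
  mem : ∀ t ∈ s, MemWeightedL1 w (g t)
  tendsto : ∀ t₀ ∈ s, Tendsto (fun t => weightedL1Norm w (g t - g t₀)) (𝓝[s] t₀) (𝓝 0)

namespace ContinuousOnWeightedL1

variable {X : Type*} [TopologicalSpace X] {g : X → ι → ℝ} {s : Set X}

theorem continuousOn_norm (hw : 0 ≤ w) (hg : ContinuousOnWeightedL1 w g s) :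
    ContinuousOn (fun t => weightedL1Norm w (g t)) s := fun t₀ ht₀ => by
  rw [ContinuousWithinAt, tendsto_iff_dist_tendsto_zero]
  refine squeeze_zero' (Eventually.of_forall fun _ => dist_nonneg) ?_ (hg.tendsto t₀ ht₀)
  filter_upwards [self_mem_nhdsWithin] with t ht
  exact (hg.mem t ht).abs_norm_sub_norm_le hw (hg.mem t₀ ht₀)

theorem continuousOn_apply (hw : ∀ x, 0 < w x) (hg : ContinuousOnWeightedL1 w g s) (x : ι) :
    ContinuousOn (fun t => g t x) s := fun t₀ ht₀ => by
  have hw₀ : 0 ≤ w := fun y => (hw y).le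
  have bound_tendsto := (hg.tendsto t₀ ht₀).div_const (w x)
  rw [zero_div] at bound_tendsto
  rw [ContinuousWithinAt, tendsto_iff_dist_tendsto_zero]
  refine squeeze_zero' (Eventually.of_forall fun _ => dist_nonneg) ?_ bound_tendsto
  filter_upwards [self_mem_nhdsWithin] with t ht
  rw [le_div_iff₀' (hw x)]
  exact ((hg.mem t ht).sub hw₀ (hg.mem t₀ ht₀)).mul_abs_le_norm hw₀ x

theorem memWeightedL1_integral_abs {g : ℝ → ι → ℝ} {T : ℝ} (hw : ∀ x, 0 < w x) (hT : 0 ≤ T)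
    (hg : ContinuousOnWeightedL1 w g (Icc 0 T)) :
    MemWeightedL1 w fun x => ∫ t in (0 : ℝ)..T, |g t x| := by
  have hw₀ : 0 ≤ w := fun y => (hw y).le
  obtain ⟨M, hM⟩ := isCompact_Icc.bddAbove_image (hg.continuousOn_norm hw₀)
  exact MemWeightedL1.integral_abs hw₀ hT hg.mem (fun t ht => hM (mem_image_of_mem _ ht))
    fun x => (hg.continuousOn_apply hw x).intervalIntegrable_of_Icc hT

end ContinuousOnWeightedL1

end WeightedL1

/-- The action of an infinite matrix on a family; its value at `x` is the junk `0` when the series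
of row `x` diverges. -/
noncomputable def tsumMulVec (Q : ι → ι → ℝ) (v : ι → ℝ) : ι → ℝ :=
  fun x => ∑' y, Q x y * v y

/-- The `n`-th term `tⁿ/n! · Qⁿ v` of the exponential series `e^{tQ} v`. -/
noncomputable def expTerm (Q : ι → ι → ℝ) (n : ℕ) (t : ℝ) (v : ι → ℝ) : ι → ℝ :=
  fun x => t ^ n / n.factorial * (tsumMulVec Q)^[n] v x

section Comparison

variable {Q : ι → ι → ℝ} {v w z : ι → ℝ} {g : ℝ → ι → ℝ} {t T : ℝ}

theorem tsumMulVec_nonneg (hQ : ∀ x y, 0 ≤ Q x y) (hv : 0 ≤ v) : 0 ≤ tsumMulVec Q v :=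
  fun x => tsum_nonneg fun y => mul_nonneg (hQ x y) (hv y)

theorem expTerm_zero (Q : ι → ι → ℝ) (t : ℝ) (v : ι → ℝ) : expTerm Q 0 t v = v := by
  funext x
  simp [expTerm]

theorem continuous_expTerm (Q : ι → ι → ℝ) (n : ℕ) (v : ι → ℝ) (x : ι) :
    Continuous fun t => expTerm Q n t v x := by
  unfold expTerm
  fun_prop

theorem continuous_sum_expTerm (Q : ι → ι → ℝ) (N : ℕ) (v : ι → ℝ) (x : ι) :
    Continuous fun t => ∑ n ∈ Finset.range N, expTerm Q n t v x :=
  continuous_finsetSum _ fun n _ => continuous_expTerm Q n v x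

theorem expTerm_mono (hQ : ∀ x y, 0 ≤ Q x y) (hv : 0 ≤ v) (ht : 0 ≤ t) (htT : t ≤ T) (n : ℕ) :
    expTerm Q n t v ≤ expTerm Q n T v := fun x => by
  have iterate_nonneg : 0 ≤ (tsumMulVec Q)^[n] v :=
    Function.Iterate.rec (fun u => 0 ≤ u) hv (fun _ => tsumMulVec_nonneg hQ) n
  unfold expTerm
  gcongr
  exact iterate_nonneg x

theorem integral_expTerm (Q : ι → ι → ℝ) (n : ℕ) (t : ℝ) (v : ι → ℝ) (x : ι) :
    ∫ s in (0 : ℝ)..t, expTerm Q n s v x =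
      t ^ (n + 1) / (n + 1).factorial * (tsumMulVec Q)^[n] v x := by
  simp only [expTerm, intervalIntegral.integral_mul_const, intervalIntegral.integral_div,
    integral_pow, zero_pow n.succ_ne_zero, sub_zero, Nat.factorial_succ, Nat.cast_mul,
    Nat.cast_succ, div_div]

theorem hasSum_mul_integral_expTerm {n : ℕ} {x : ι}
    (hv : Summable fun y => Q x y * (tsumMulVec Q)^[n] v y) (t : ℝ) :
    HasSum (fun y => Q x y * ∫ s in (0 : ℝ)..t, expTerm Q n s v y) (expTerm Q (n + 1) t v x) := by
  simp only [integral_expTerm, mul_left_comm (Q x _)]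
  rw [expTerm, Function.iterate_succ_apply']
  exact hv.hasSum.mul_left _

theorem hasSum_mul_integral_sum_expTerm_add {N : ℕ} {x : ι}
    (hz : ∀ n, Summable fun y => Q x y * (tsumMulVec Q)^[n] z y)
    (hw : Summable fun y => Q x y * (tsumMulVec Q)^[N] w y) (t : ℝ) :
    HasSum
      (fun y => Q x y * ∫ s in (0 : ℝ)..t,
        (∑ n ∈ Finset.range N, expTerm Q n s z y) + expTerm Q N s w y)
      ((∑ n ∈ Finset.range N, expTerm Q (n + 1) t z x) + expTerm Q (N + 1) t w x) := by
  refine ((hasSum_sum fun n _ => hasSum_mul_integral_expTerm (hz n) t).add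
    (hasSum_mul_integral_expTerm hw t)).congr_fun fun y => ?_
  rw [intervalIntegral.integral_add ((continuous_sum_expTerm Q N z y).intervalIntegrable _ _)
      ((continuous_expTerm Q N w y).intervalIntegrable _ _),
    intervalIntegral.integral_finsetSum fun n _ =>
      (continuous_expTerm Q n z y).intervalIntegrable _ _, mul_add, Finset.mul_sum]

theorem abs_integral_le_integral_abs_of_le {f : ℝ → ℝ} (hf : IntervalIntegrable f volume 0 T)
    (ht : 0 ≤ t) (htT : t ≤ T) :
    |∫ s in (0 : ℝ)..t, f s| ≤ ∫ s in (0 : ℝ)..T, |f s| :=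
  (intervalIntegral.abs_integral_le_integral_abs ht).trans <|
    intervalIntegral.integral_mono_interval le_rfl ht htT
      (Eventually.of_forall fun _ => abs_nonneg _) hf.abs

theorem summable_mul_integral (hQ : ∀ x y, 0 ≤ Q x y)
    (hint : ∀ y, IntervalIntegrable (fun s => g s y) volume 0 T) (ht : t ∈ Icc 0 T) {x : ι}
    (hrow : Summable fun y => Q x y * ∫ s in (0 : ℝ)..T, |g s y|) :
    Summable fun y => Q x y * ∫ s in (0 : ℝ)..t, g s y := by
  refine Summable.of_norm_bounded hrow fun y => ?_
  rw [norm_mul, Real.norm_of_nonneg (hQ x y)]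
  exact mul_le_mul_of_nonneg_left
    (abs_integral_le_integral_abs_of_le (hint y) ht.1 ht.2) (hQ x y)

theorem le_add_tsumMulVec_integral_abs (hQ : ∀ x y, 0 ≤ Q x y)
    (hint : ∀ y, IntervalIntegrable (fun s => g s y) volume 0 T)
    (hrow : ∀ x, Summable fun y => Q x y * ∫ s in (0 : ℝ)..T, |g s y|)
    (hineq : ∀ x, ∀ t ∈ Icc 0 T, g t x ≤ z x + ∑' y, Q x y * ∫ s in (0 : ℝ)..t, g s y) :
    ∀ x, ∀ t ∈ Icc 0 T, g t x ≤ (z + tsumMulVec Q fun y => ∫ s in (0 : ℝ)..T, |g s y|) x :=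
  fun x t ht => (hineq x t ht).trans <| add_le_add_right
    ((summable_mul_integral hQ hint ht (hrow x)).tsum_le_tsum
      (fun y => mul_le_mul_of_nonneg_left ((le_abs_self _).trans
        (abs_integral_le_integral_abs_of_le (hint y) ht.1 ht.2)) (hQ x y)) (hrow x)) _

theorem le_sum_expTerm_add (hQ : ∀ x y, 0 ≤ Q x y)
    (hint : ∀ y, IntervalIntegrable (fun s => g s y) volume 0 T)
    (hrow : ∀ x, Summable fun y => Q x y * ∫ s in (0 : ℝ)..T, |g s y|)
    (hineq : ∀ x, ∀ t ∈ Icc 0 T, g t x ≤ z x + ∑' y, Q x y * ∫ s in (0 : ℝ)..t, g s y)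
    (hz : ∀ n x, Summable fun y => Q x y * (tsumMulVec Q)^[n] z y)
    (hw : ∀ n x, Summable fun y => Q x y * (tsumMulVec Q)^[n] w y)
    (hgw : ∀ x, ∀ t ∈ Icc 0 T, g t x ≤ w x) (N : ℕ) :
    ∀ x, ∀ t ∈ Icc 0 T,
      g t x ≤ (∑ n ∈ Finset.range N, expTerm Q n t z x) + expTerm Q N t w x := by
  induction N with
  | zero => simpa [expTerm_zero] using hgw
  | succ N ih =>
    intro x t ht
    have hsub : Icc 0 t ⊆ Icc 0 T := Icc_subset_Icc_right ht.2
    have integral_le : ∀ y, ∫ s in (0 : ℝ)..t, g s y ≤ ∫ s in (0 : ℝ)..t,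
        (∑ n ∈ Finset.range N, expTerm Q n s z y) + expTerm Q N s w y := fun y => by
      refine intervalIntegral.integral_mono_on ht.1 ?_ ?_ fun s hs => ih y s (hsub hs)
      · exact (hint y).mono_set (by
          rw [uIcc_of_le ht.1, uIcc_of_le (ht.1.trans ht.2)]; exact hsub)
      · exact ((continuous_sum_expTerm Q N z y).add
          (continuous_expTerm Q N w y)).intervalIntegrable _ _
    calc g t x ≤ z x + ∑' y, Q x y * ∫ s in (0 : ℝ)..t, g s y := hineq x t ht
      _ ≤ z x + ((∑ n ∈ Finset.range N, expTerm Q (n + 1) t z x) + expTerm Q (N + 1) t w x) := by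
          gcongr
          exact hasSum_le (fun y => mul_le_mul_of_nonneg_left (integral_le y) (hQ x y))
            (summable_mul_integral hQ hint ht (hrow x)).hasSum
            (hasSum_mul_integral_sum_expTerm_add (fun n => hz n x) (hw N x) t)
      _ = (∑ n ∈ Finset.range (N + 1), expTerm Q n t z x) + expTerm Q (N + 1) t w x := by
          rw [Finset.sum_range_succ', expTerm_zero]
          ring

theorem le_tsum_expTerm (hQ : ∀ x y, 0 ≤ Q x y)
    (hint : ∀ y, IntervalIntegrable (fun s => g s y) volume 0 T)
    (hrow : ∀ x, Summable fun y => Q x y * ∫ s in (0 : ℝ)..T, |g s y|)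
    (hineq : ∀ x, ∀ t ∈ Icc 0 T, g t x ≤ z x + ∑' y, Q x y * ∫ s in (0 : ℝ)..t, g s y)
    (hz : ∀ n x, Summable fun y => Q x y * (tsumMulVec Q)^[n] z y)
    (hw : ∀ n x, Summable fun y => Q x y * (tsumMulVec Q)^[n] w y)
    (hgw : ∀ x, ∀ t ∈ Icc 0 T, g t x ≤ w x)
    {x : ι} (ht : t ∈ Icc 0 T) (hz_exp : Summable fun n => expTerm Q n t z x)
    (hw_exp : Tendsto (fun n => expTerm Q n t w x) atTop (𝓝 0)) :
    g t x ≤ ∑' n, expTerm Q n t z x := by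
  have bound_tendsto := hz_exp.hasSum.tendsto_sum_nat.add hw_exp
  rw [add_zero] at bound_tendsto
  exact ge_of_tendsto' bound_tendsto fun N =>
    le_sum_expTerm_add hQ hint hrow hineq hz hw hgw N x t ht

end Comparison

/-- The weight `e^{-a r(x)}` defining the space `l¹_a`, where `r(x) = |x|` in the setting of
configurations in `ℝ^d`. -/
noncomputable def expWeight (r : ι → ℝ) (a : ℝ) : ι → ℝ :=
  fun x => Real.exp (-a * r x)

theorem expWeight_pos (r : ι → ℝ) (a : ℝ) (x : ι) : 0 < expWeight r a x :=
  Real.exp_pos _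

theorem expWeight_nonneg (r : ι → ℝ) (a : ℝ) : 0 ≤ expWeight r a :=
  fun x => (expWeight_pos r a x).le

theorem expWeight_antitone {r : ι → ℝ} (hr : 0 ≤ r) : Antitone (expWeight r) :=
  fun _ _ hab x => Real.exp_le_exp.2 (mul_le_mul_of_nonneg_right (neg_le_neg hab) (hr x))

/-- The matrix `Q` acts as an Ovsjannikov map of order `q` and constant `L` on the scale
`{l¹_a}`, `a ∈ [amin, amax]`. By linearity, the Lipschitz estimate is stated for the distance to
`0` only; since `tsum` has junk values, convergence of the rows is part of the notion. -/
def IsOvsjannikov (r : ι → ℝ) (amin amax q L : ℝ) (Q : ι → ι → ℝ) : Prop :=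
  ∀ α β : ℝ, amin ≤ α → α < β → β ≤ amax → ∀ v : ι → ℝ, MemWeightedL1 (expWeight r α) v →
    (∀ x, Summable fun y => Q x y * v y) ∧
    MemWeightedL1 (expWeight r β) (tsumMulVec Q v) ∧
    weightedL1Norm (expWeight r β) (tsumMulVec Q v) ≤
      L / (β - α) ^ q * weightedL1Norm (expWeight r α) v

namespace IsOvsjannikov

variable {r : ι → ℝ} {amin amax q L α β T : ℝ} {Q : ι → ι → ℝ} {v z : ι → ℝ} {g : ℝ → ι → ℝ}

theorem memWeightedL1_iterate_step_and_norm_le (hQ : IsOvsjannikov r amin amax q L Q)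
    (hL : 0 ≤ L) {δ : ℝ} (hα : amin ≤ α) (hδ : 0 < δ) (hv : MemWeightedL1 (expWeight r α) v) (k : ℕ)
    (hk : α + k * δ ≤ amax) :
    MemWeightedL1 (expWeight r (α + k * δ)) ((tsumMulVec Q)^[k] v) ∧
      weightedL1Norm (expWeight r (α + k * δ)) ((tsumMulVec Q)^[k] v) ≤
        (L / δ ^ q) ^ k * weightedL1Norm (expWeight r α) v := by
  induction k with
  | zero => simpa using hv
  | succ k ih =>
    have step_eq : α + (k + 1 : ℕ) * δ = α + k * δ + δ := by push_cast; ring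
    rw [step_eq] at hk ⊢
    rw [Function.iterate_succ_apply']
    obtain ⟨mem_k, norm_k⟩ := ih (by linarith)
    obtain ⟨-, mem_succ, norm_succ⟩ := hQ (α + k * δ) (α + k * δ + δ)
      (le_add_of_le_of_nonneg hα (by positivity)) (lt_add_of_pos_right _ hδ) hk _ mem_k
    refine ⟨mem_succ, norm_succ.trans ?_⟩
    rw [add_sub_cancel_left, pow_succ', mul_assoc]
    gcongr

theorem memWeightedL1_iterate_and_norm_le (hQ : IsOvsjannikov r amin amax q L Q)
    (hr : 0 ≤ r) (hL : 0 ≤ L) (hα : amin ≤ α) (hαβ : α < β) (hβ : β ≤ amax)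
    (hv : MemWeightedL1 (expWeight r α) v) (n : ℕ) :
    MemWeightedL1 (expWeight r β) ((tsumMulVec Q)^[n] v) ∧
      weightedL1Norm (expWeight r β) ((tsumMulVec Q)^[n] v) ≤
        (L / (β - α) ^ q) ^ n * (n : ℝ) ^ (q * n) * weightedL1Norm (expWeight r α) v := by
  rcases n.eq_zero_or_pos with rfl | hn
  · have hmono := expWeight_antitone hr hαβ.le
    have hvβ := hv.mono_weight (expWeight_nonneg r β) hmono
    have norm_le : weightedL1Norm (expWeight r β) v ≤ weightedL1Norm (expWeight r α) v :=
      hvβ.tsum_le_tsum (fun x => mul_le_mul_of_nonneg_right (hmono x) (abs_nonneg (v x))) hv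
    exact ⟨hvβ, by simpa using norm_le⟩
  · have hn' : (0 : ℝ) < n := Nat.cast_pos.2 hn
    have hδ : 0 < β - α := sub_pos.2 hαβ
    have end_eq : α + n * ((β - α) / n) = β := by rw [mul_div_cancel₀ _ hn'.ne']; ring
    obtain ⟨mem, norm_le⟩ :=
      hQ.memWeightedL1_iterate_step_and_norm_le hL hα (div_pos hδ hn') hv n (end_eq.trans_le hβ)
    rw [end_eq] at mem norm_le
    refine ⟨mem, norm_le.trans_eq ?_⟩
    rw [Real.div_rpow hδ.le hn'.le, Real.rpow_mul hn'.le, Real.rpow_natCast, ← mul_pow,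
      div_div_eq_mul_div, mul_div_right_comm]

theorem summable_row_iterate (hQ : IsOvsjannikov r amin amax q L Q) (hr : 0 ≤ r) (hL : 0 ≤ L)
    (hα : amin ≤ α) (hα' : α < amax) (hv : MemWeightedL1 (expWeight r α) v) (n : ℕ) (x : ι) :
    Summable fun y => Q x y * (tsumMulVec Q)^[n] v y := by
  obtain ⟨a, hαa, ha⟩ := exists_between hα'
  exact (hQ a amax (hα.trans hαa.le) ha le_rfl _
    (hQ.memWeightedL1_iterate_and_norm_le hr hL hα hαa ha.le hv n).1).1 x

theorem memWeightedL1_expTerm_and_norm_le (hQ : IsOvsjannikov r amin amax q L Q)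
    (hr : 0 ≤ r) (hL : 0 ≤ L) (hT : 0 ≤ T) (hα : amin ≤ α) (hαβ : α < β) (hβ : β ≤ amax)
    (hv : MemWeightedL1 (expWeight r α) v) (n : ℕ) :
    MemWeightedL1 (expWeight r β) (expTerm Q n T v) ∧
      weightedL1Norm (expWeight r β) (expTerm Q n T v) ≤
        ovsjannikovCoeff q L T (β - α) n * weightedL1Norm (expWeight r α) v := by
  obtain ⟨mem, norm_le⟩ := hQ.memWeightedL1_iterate_and_norm_le hr hL hα hαβ hβ hv n
  have hc : 0 ≤ T ^ n / n.factorial := by positivity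
  have term_eq : ∀ x, expWeight r β x * |expTerm Q n T v x| =
      T ^ n / n.factorial * (expWeight r β x * |(tsumMulVec Q)^[n] v x|) := fun x => by
    rw [expTerm, abs_mul, abs_of_nonneg hc, mul_left_comm]
  constructor
  · simpa only [MemWeightedL1, term_eq] using mem.mul_left (T ^ n / n.factorial)
  · simp only [weightedL1Norm, term_eq, tsum_mul_left]
    rw [ovsjannikovCoeff_eq q L T (sub_nonneg.2 hαβ.le), mul_assoc]
    exact mul_le_mul_of_nonneg_left norm_le hc

theorem summable_norm_expTerm (hQ : IsOvsjannikov r amin amax q L Q) (hr : 0 ≤ r) (hq : q < 1)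
    (hL : 0 ≤ L) (hT : 0 ≤ T) (hα : amin ≤ α) (hαβ : α < β) (hβ : β ≤ amax)
    (hv : MemWeightedL1 (expWeight r α) v) :
    Summable fun n => weightedL1Norm (expWeight r β) (expTerm Q n T v) :=
  Summable.of_nonneg_of_le (fun _ => weightedL1Norm_nonneg (expWeight_nonneg r β) _)
    (fun n => (hQ.memWeightedL1_expTerm_and_norm_le hr hL hT hα hαβ hβ hv n).2)
    ((summable_ovsjannikovCoeff hq L T (sub_nonneg.2 hαβ.le)).mul_right _)

theorem summable_expTerm (hQ : IsOvsjannikov r amin amax q L Q) (hr : 0 ≤ r) (hq : q < 1)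
    (hL : 0 ≤ L) (hT : 0 ≤ T) (hα : amin ≤ α) (hα' : α < amax)
    (hv : MemWeightedL1 (expWeight r α) v) (x : ι) :
    Summable fun n => expTerm Q n T v x :=
  MemWeightedL1.summable_apply_of_summable_norm (expWeight_pos r amax)
    (fun n => (hQ.memWeightedL1_expTerm_and_norm_le hr hL hT hα hα' le_rfl hv n).1)
    (hQ.summable_norm_expTerm hr hq hL hT hα hα' le_rfl hv) x

theorem memWeightedL1_tsum_expTerm_and_norm_le (hQ : IsOvsjannikov r amin amax q L Q) (hr : 0 ≤ r)
    (hq : q < 1) (hL : 0 ≤ L) (hT : 0 ≤ T) (hα : amin ≤ α) (hαβ : α < β) (hβ : β ≤ amax)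
    (hv : MemWeightedL1 (expWeight r α) v) :
    MemWeightedL1 (expWeight r β) (fun x => ∑' n, expTerm Q n T v x) ∧
      weightedL1Norm (expWeight r β) (fun x => ∑' n, expTerm Q n T v x) ≤
        (∑' n, ovsjannikovCoeff q L T (β - α) n) * weightedL1Norm (expWeight r α) v := by
  have hterm := hQ.memWeightedL1_expTerm_and_norm_le hr hL hT hα hαβ hβ hv
  have hnorm := hQ.summable_norm_expTerm hr hq hL hT hα hαβ hβ hv
  obtain ⟨mem_tsum, norm_tsum_le⟩ :=
    MemWeightedL1.tsum_and_norm_tsum_le (expWeight_pos r β) (fun n => (hterm n).1) hnorm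
  refine ⟨mem_tsum, norm_tsum_le.trans ?_⟩
  rw [← tsum_mul_right]
  exact hnorm.tsum_le_tsum (fun n => (hterm n).2)
    ((summable_ovsjannikovCoeff hq L T (sub_nonneg.2 hαβ.le)).mul_right _)

theorem le_tsum_expTerm_abs (hQ : IsOvsjannikov r amin amax q L Q) (hr : 0 ≤ r)
    (hQpos : ∀ x y, 0 ≤ Q x y) (hq : q < 1) (hL : 0 ≤ L) (ha : amin < amax)
    (hz : MemWeightedL1 (expWeight r amin) z)
    (hg : ContinuousOnWeightedL1 (expWeight r amin) g (Icc 0 T))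
    (hineq : ∀ x, ∀ t ∈ Icc 0 T, g t x ≤ z x + ∑' y, Q x y * ∫ s in (0 : ℝ)..t, g s y)
    {t : ℝ} (ht : t ∈ Icc 0 T) (x : ι) :
    g t x ≤ ∑' n, expTerm Q n T |z| x := by
  have hT : 0 ≤ T := ht.1.trans ht.2
  have hG := hg.memWeightedL1_integral_abs (expWeight_pos r amin) hT
  have hint : ∀ y, IntervalIntegrable (fun s => g s y) volume 0 T := fun y =>
    (hg.continuousOn_apply (expWeight_pos r amin) y).intervalIntegrable_of_Icc hT
  have hrow := (hQ amin amax le_rfl ha le_rfl _ hG).1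
  have habs := memWeightedL1_abs.2 hz
  have hineq_abs : ∀ x, ∀ t ∈ Icc 0 T,
      g t x ≤ |z| x + ∑' y, Q x y * ∫ s in (0 : ℝ)..t, g s y := fun x t ht =>
    (hineq x t ht).trans (add_le_add_left (le_abs_self _) _)
  -- `Q` maps out of `l¹_amin`, so the dominating vector `|z| + QG` lives slightly above `amin`.
  obtain ⟨a, hamin, hamax⟩ := exists_between ha
  have hw : MemWeightedL1 (expWeight r a)
      (|z| + tsumMulVec Q fun y => ∫ s in (0 : ℝ)..T, |g s y|) :=
    (habs.mono_weight (expWeight_nonneg r a) (expWeight_antitone hr hamin.le)).add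
      (expWeight_nonneg r a) (hQ amin a le_rfl hamin hamax.le _ hG).2.1
  have hz_exp {s : ℝ} (hs : 0 ≤ s) := hQ.summable_expTerm hr hq hL hs le_rfl ha habs x
  calc g t x ≤ ∑' n, expTerm Q n t |z| x :=
        le_tsum_expTerm hQpos hint hrow hineq_abs
          (hQ.summable_row_iterate hr hL le_rfl ha habs)
          (hQ.summable_row_iterate hr hL hamin.le hamax hw)
          (le_add_tsumMulVec_integral_abs hQpos hint hrow hineq_abs) ht (hz_exp ht.1)
          (hQ.summable_expTerm hr hq hL ht.1 hamin.le hamax hw x).tendsto_atTop_zero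
    _ ≤ ∑' n, expTerm Q n T |z| x :=
        (hz_exp ht.1).tsum_le_tsum
          (fun n => expTerm_mono hQpos (abs_nonneg z) ht.1 ht.2 n x) (hz_exp hT)

end IsOvsjannikov

theorem statement17_general {r : ι → ℝ} (hr : 0 ≤ r) {amin amax q L T : ℝ} (hT : 0 ≤ T)
    {Q : ι → ι → ℝ} (hQpos : ∀ x y, 0 ≤ Q x y) (hq : q < 1) (hL : 0 ≤ L)
    (hQ : IsOvsjannikov r amin amax q L Q)
    {z : ι → ℝ} (hz : MemWeightedL1 (expWeight r amin) z)
    {g : ℝ → ι → ℝ} (hg : ContinuousOnWeightedL1 (expWeight r amin) g (Icc 0 T))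
    (hineq : ∀ x, ∀ t ∈ Icc 0 T, g t x ≤ z x + ∑' y, Q x y * ∫ s in (0 : ℝ)..t, g s y)
    {α β : ℝ} (hα : amin ≤ α) (hαβ : α < β) (hβ : β ≤ amax) :
    Summable (fun x => expWeight r β x * ⨆ t : Icc (0 : ℝ) T, g t x) ∧
      ∑' x, expWeight r β x * ⨆ t : Icc (0 : ℝ) T, g t x ≤
        (∑' n, ovsjannikovCoeff q L T (β - α) n) * weightedL1Norm (expWeight r α) z := by
  have hwβ := expWeight_nonneg r β
  have zero_mem : (0 : ℝ) ∈ Icc 0 T := left_mem_Icc.2 hT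
  have : Nonempty (Icc (0 : ℝ) T) := ⟨⟨0, zero_mem⟩⟩
  have hle : ∀ (x) (t : Icc (0 : ℝ) T), g t x ≤ ∑' n, expTerm Q n T |z| x := fun x t =>
    hQ.le_tsum_expTerm_abs hr hQpos hq hL (hα.trans_lt (hαβ.trans_le hβ)) hz hg hineq t.2 x
  have hsup_le : ∀ x, ⨆ t : Icc (0 : ℝ) T, g t x ≤ ∑' n, expTerm Q n T |z| x :=
    fun x => ciSup_le (hle x)
  have le_hsup : ∀ x, g 0 x ≤ ⨆ t : Icc (0 : ℝ) T, g t x := fun x =>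
    le_ciSup (f := fun t : Icc (0 : ℝ) T => g t x) ⟨_, forall_mem_range.2 (hle x)⟩ ⟨0, zero_mem⟩
  have hzα := hz.mono_weight (expWeight_nonneg r α) (expWeight_antitone hr hα)
  obtain ⟨mem_exp, norm_exp⟩ := hQ.memWeightedL1_tsum_expTerm_and_norm_le hr hq hL hT hα hαβ hβ
    (memWeightedL1_abs.2 hzα)
  have mem_zero := (hg.mem 0 zero_mem).mono_weight hwβ
    (expWeight_antitone hr (hα.trans hαβ.le))
  have hsum := (MemWeightedL1.of_le_of_le hwβ mem_zero mem_exp le_hsup hsup_le).summable_mul hwβ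
  refine ⟨hsum, ?_⟩
  calc ∑' x, expWeight r β x * ⨆ t : Icc (0 : ℝ) T, g t x
      ≤ weightedL1Norm (expWeight r β) fun x => ∑' n, expTerm Q n T |z| x :=
        hsum.tsum_le_tsum (fun x => mul_le_mul_of_nonneg_left
          ((hsup_le x).trans (le_abs_self _)) (hwβ x)) mem_exp
    _ ≤ _ := weightedL1Norm_abs (expWeight r α) z ▸ norm_exp

end

theorem statement17 (d : ℕ) (γ : Set (EuclideanSpace ℝ (Fin d)))
    (hloc : ∀ K : Set (EuclideanSpace ℝ (Fin d)), IsCompact K → (γ ∩ K).Finite)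
    (amin amax : ℝ) (hamin : 0 < amin) (hminmax : amin < amax)
    (T : ℝ) (hT : 0 < T)
    (z : γ → ℝ)
    (hz : Summable (fun x : γ =>
      Real.exp (-amin * ‖(x : EuclideanSpace ℝ (Fin d))‖) * |z x|))
    (Q : γ → γ → ℝ) (hQpos : ∀ x y : γ, 0 ≤ Q x y)
    (q L : ℝ) (hq0 : 0 ≤ q) (hq1 : q < 1) (hL : 0 < L)
    -- `v ↦ Qv` is an Ovsjannikov map of order `q` and constant `L` on the scale `{l¹_𝔞}`
    (hQovs : ∀ α β : ℝ, amin ≤ α → α < β → β ≤ amax → ∀ v : γ → ℝ,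
      Summable (fun x : γ =>
        Real.exp (-α * ‖(x : EuclideanSpace ℝ (Fin d))‖) * |v x|) →
      (∀ x : γ, Summable (fun y : γ => Q x y * v y)) ∧
      Summable (fun x : γ => Real.exp (-β * ‖(x : EuclideanSpace ℝ (Fin d))‖) *
        |∑' y : γ, Q x y * v y|) ∧
      (∑' x : γ, Real.exp (-β * ‖(x : EuclideanSpace ℝ (Fin d))‖) *
          |∑' y : γ, Q x y * v y|) ≤
        L / (β - α) ^ q *
          ∑' x : γ, Real.exp (-α * ‖(x : EuclideanSpace ℝ (Fin d))‖) * |v x|)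
    -- `g` is continuous into `l¹_{𝔞₋}` and satisfies the componentwise inequality
    (g : ℝ → γ → ℝ)
    (hgmem : ∀ t ∈ Icc (0 : ℝ) T,
      Summable (fun x : γ =>
        Real.exp (-amin * ‖(x : EuclideanSpace ℝ (Fin d))‖) * |g t x|))
    (hgcont : ∀ t₀ ∈ Icc (0 : ℝ) T,
      Tendsto (fun t => ∑' x : γ,
          Real.exp (-amin * ‖(x : EuclideanSpace ℝ (Fin d))‖) * |g t x - g t₀ x|)
        (nhdsWithin t₀ (Icc (0 : ℝ) T)) (nhds 0))
    (hgineq : ∀ x : γ, ∀ t ∈ Icc (0 : ℝ) T,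
      g t x ≤ z x + ∑' y : γ, Q x y * ∫ s in (0 : ℝ)..t, g s y)
    -- nonnegativity assumptions
    (hznn : ∀ x : γ, 0 ≤ z x)
    (hgnn : ∀ x : γ, ∀ t ∈ Icc (0 : ℝ) T, 0 ≤ g t x) :
    ∀ α β : ℝ, amin ≤ α → α < β → β ≤ amax →
      Summable (fun x : γ => Real.exp (-β * ‖(x : EuclideanSpace ℝ (Fin d))‖) *
        ⨆ t : Icc (0 : ℝ) T, g t x) ∧
      (∑' x : γ, Real.exp (-β * ‖(x : EuclideanSpace ℝ (Fin d))‖) *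
          ⨆ t : Icc (0 : ℝ) T, g t x) ≤
        (∑' n : ℕ, L ^ n * T ^ n * (n : ℝ) ^ (q * n) /
            ((β - α) ^ (q * n) * (n.factorial : ℝ))) *
          ∑' x : γ, Real.exp (-α * ‖(x : EuclideanSpace ℝ (Fin d))‖) * z x := by
  intro α β hα hαβ hβ
  have norm_eq : weightedL1Norm (expWeight (fun x : γ => ‖(x : EuclideanSpace ℝ (Fin d))‖) α) z =
      ∑' x : γ, Real.exp (-α * ‖(x : EuclideanSpace ℝ (Fin d))‖) * z x := by
    simp only [weightedL1Norm, expWeight, abs_of_nonneg (hznn _)]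
  rw [← norm_eq]
  exact statement17_general (fun x => norm_nonneg _) hT.le hQpos hq1 hL.le hQovs hz
    ⟨hgmem, hgcont⟩ hgineq hα hαβ hβ
end
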